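/- Let (X, f_{1,∞}) be an NDS and n ∈ ℕ. Then f_{1,∞} is Δ-transitive if and only if its n-th iterate f_{1,∞}^{[n]} is Δ-transitive. -/

import Mathlib

open Set Filter

section NDSDefs

variable {X : Type*}

/-- `nComp f i n` is the composition `f (i+n-1) ∘ ⋯ ∘ f (i+1) ∘ f i`.
Here `f` is the 0-indexed sequence of maps of the NDS (so `f 0` is the paper's `f₁`),
and `nComp f 0 n` is the paper's `f₁ⁿ`. -/
def nComp (f : ℕ → X → X) (i : ℕ) : ℕ → X → X
  | 0 => id
  | n + 1 => f (i + n) ∘ nComp f i n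

/-- The `k`-th iterate NDS `f^{[k]}`: its `n`-th map (0-indexed) is `f_{kn+1}^{k}`
in the paper's notation, i.e. the composition of `k` maps of `f` starting at index `k*n`. -/
def iterNDS (f : ℕ → X → X) (k : ℕ) : ℕ → X → X :=
  fun n => nComp f (k * n) k

/-- The product NDS `f^{[a]} = f^{[a 0]} × ⋯ × f^{[a (r-1)]}` on `Fin r → X`
for a vector `a : Fin r → ℕ`. -/
def vecIter (f : ℕ → X → X) {r : ℕ} (a : Fin r → ℕ) : ℕ → (Fin r → X) → Fin r → X :=
  fun n x i => iterNDS f (a i) n (x i)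

section Topo

variable [TopologicalSpace X]

/-- Topological transitivity of an NDS. -/
def NDSTransitive (f : ℕ → X → X) : Prop :=
  ∀ U V : Set X, IsOpen U → U.Nonempty → IsOpen V → V.Nonempty →
    ∃ n : ℕ, 1 ≤ n ∧ (nComp f 0 n '' U ∩ V).Nonempty

/-- Multi-transitivity of an NDS. -/
def MultiTransitive (f : ℕ → X → X) : Prop :=
  ∀ m : ℕ, 1 ≤ m → ∀ U V : Fin m → Set X,
    (∀ i, IsOpen (U i)) → (∀ i, (U i).Nonempty) →
    (∀ i, IsOpen (V i)) → (∀ i, (V i).Nonempty) →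
    ∃ l : ℕ, 1 ≤ l ∧ ∀ i : Fin m, (nComp f 0 ((i.1 + 1) * l) '' U i ∩ V i).Nonempty

/-- Multi-transitivity of an NDS with respect to a vector `a`. -/
def MultiTransWrt (f : ℕ → X → X) {p : ℕ} (a : Fin p → ℕ) : Prop :=
  ∀ U V : Fin p → Set X,
    (∀ i, IsOpen (U i)) → (∀ i, (U i).Nonempty) →
    (∀ i, IsOpen (V i)) → (∀ i, (V i).Nonempty) →
    ∃ l : ℕ, 1 ≤ l ∧ ∀ i : Fin p, (nComp f 0 (a i * l) '' U i ∩ V i).Nonempty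

/-- Strong multi-transitivity of an NDS: multi-transitivity with respect to every
vector of positive integers. -/
def StronglyMultiTransitive (f : ℕ → X → X) : Prop :=
  ∀ p : ℕ, 1 ≤ p → ∀ a : Fin p → ℕ, (∀ i, 1 ≤ a i) → MultiTransWrt f a

/-- Weak mixing of order `n` of an NDS. -/
def WeaklyMixingOfOrder (f : ℕ → X → X) (n : ℕ) : Prop :=
  ∀ U V : Fin n → Set X,
    (∀ i, IsOpen (U i)) → (∀ i, (U i).Nonempty) →
    (∀ i, IsOpen (V i)) → (∀ i, (V i).Nonempty) →
    ∃ m : ℕ, 1 ≤ m ∧ ∀ i : Fin n, (nComp f 0 m '' U i ∩ V i).Nonempty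

/-- Weak mixing of all orders of an NDS. -/
def WeaklyMixingAllOrders (f : ℕ → X → X) : Prop :=
  ∀ n : ℕ, 2 ≤ n → WeaklyMixingOfOrder f n

/-- Mild mixing of an NDS: the product with any transitive NDS (on a compact
metric space, with continuous maps) is transitive. -/
def MildlyMixing (f : ℕ → X → X) : Prop :=
  ∀ (Y : Type) [MetricSpace Y] [CompactSpace Y] (g : ℕ → Y → Y),
    (∀ n, Continuous (g n)) → NDSTransitive g →
      NDSTransitive (fun n (p : X × Y) => (f n p.1, g n p.2))

/-- Δ-transitivity of an NDS. -/
def DeltaTransitive (f : ℕ → X → X) : Prop :=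
  ∀ m : ℕ, 1 ≤ m → ∃ Y : Set X, Dense Y ∧ IsGδ Y ∧
    ∀ x ∈ Y, Dense {y : Fin m → X | ∃ n : ℕ, 1 ≤ n ∧ y = fun i => nComp f 0 ((i.1 + 1) * n) x}

/-- Δ-mixing of an NDS. -/
def DeltaMixing (f : ℕ → X → X) : Prop :=
  ∀ m : ℕ, 1 ≤ m → ∀ A : Set ℕ, A.Infinite → 0 ∉ A →
    ∃ Y : Set X, Dense Y ∧ IsGδ Y ∧
      ∀ x ∈ Y, Dense {y : Fin m → X | ∃ n ∈ A, y = fun i => nComp f 0 ((i.1 + 1) * n) x}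

/-- The set `N_{f_{1,∞}}(U,V)` of (positive) hitting times. -/
def hitTimes (f : ℕ → X → X) (U V : Set X) : Set ℕ :=
  {n : ℕ | 1 ≤ n ∧ (nComp f 0 n '' U ∩ V).Nonempty}

/-- A set of positive integers is syndetic if it has bounded gaps. -/
def Syndetic (A : Set ℕ) : Prop :=
  ∃ M : ℕ, ∀ i : ℕ, 1 ≤ i → ∃ j ∈ A, i ≤ j ∧ j ≤ i + M

/-- A set of positive integers is thick if it contains arbitrarily long runs. -/
def ThickSet (A : Set ℕ) : Prop :=
  ∀ p : ℕ, ∃ n : ℕ, 1 ≤ n ∧ ∀ j ≤ p, n + j ∈ A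

/-- A set of positive integers is thickly syndetic. -/
def ThicklySyndetic (A : Set ℕ) : Prop :=
  ∀ l : ℕ, Syndetic {m : ℕ | ∀ j ≤ l, m + j ∈ A}

/-- Thick transitivity of an NDS. -/
def ThicklyTransitive (f : ℕ → X → X) : Prop :=
  ∀ U V : Set X, IsOpen U → U.Nonempty → IsOpen V → V.Nonempty →
    ThickSet (hitTimes f U V)

/-- Thickly syndetic transitivity of an NDS. -/
def ThicklySyndeticallyTransitive (f : ℕ → X → X) : Prop :=
  ∀ U V : Set X, IsOpen U → U.Nonempty → IsOpen V → V.Nonempty →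
    ThicklySyndetic (hitTimes f U V)

/-- Total transitivity of an NDS: every iterate `f^{[n]}` is transitive. -/
def TotallyTransitive (f : ℕ → X → X) : Prop :=
  ∀ n : ℕ, 1 ≤ n → NDSTransitive (iterNDS f n)

/-- An NDS is feeble open if each map sends nonempty open sets to sets with
nonempty interior. -/
def FeebleOpen (f : ℕ → X → X) : Prop :=
  ∀ i : ℕ, ∀ U : Set X, IsOpen U → U.Nonempty → (interior (f i '' U)).Nonempty

/-- Strong multi-transitivity of an autonomous system `(X, g)`. -/
def ADSStronglyMultiTransitive (g : X → X) : Prop :=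
  ∀ m : ℕ, 1 ≤ m → ∀ a : Fin m → ℕ, (∀ j, 1 ≤ a j) →
    ∀ U V : Fin m → Set X,
      (∀ j, IsOpen (U j)) → (∀ j, (U j).Nonempty) →
      (∀ j, IsOpen (V j)) → (∀ j, (V j).Nonempty) →
      ∃ l : ℕ, 1 ≤ l ∧ ∀ j : Fin m, (g^[a j * l] '' U j ∩ V j).Nonempty

/-- Δ-transitivity of an autonomous system `(X, g)`. -/
def ADSDeltaTransitive (g : X → X) : Prop :=
  ∀ m : ℕ, 1 ≤ m → ∃ Y : Set X, Dense Y ∧ IsGδ Y ∧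
    ∀ x ∈ Y, Dense {y : Fin m → X | ∃ n : ℕ, 1 ≤ n ∧ y = fun i => g^[(i.1 + 1) * n] x}

/-- Thickly syndetic transitivity of an autonomous system `(X, g)`. -/
def ADSThicklySyndeticallyTransitive (g : X → X) : Prop :=
  ∀ U V : Set X, IsOpen U → U.Nonempty → IsOpen V → V.Nonempty →
    ThicklySyndetic {n : ℕ | 1 ≤ n ∧ (g^[n] '' U ∩ V).Nonempty}

end Topo

section MetricDefs

variable [MetricSpace X]

/-- The compositions `f_r^k` converge collectively to the iterates `g^k`. -/
def CollectiveConvergence (f : ℕ → X → X) (g : X → X) : Prop :=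
  ∀ ε : ℝ, 0 < ε → ∃ r₀ : ℕ, ∀ r ≥ r₀, ∀ k : ℕ, 1 ≤ k → ∀ x : X,
    dist (nComp f r k x) (g^[k] x) < ε

/-- Chain mixing of an NDS. -/
def NDSChainMixing (f : ℕ → X → X) : Prop :=
  ∀ x y : X, ∀ δ : ℝ, 0 < δ → ∃ N : ℕ, 1 ≤ N ∧ ∀ n ≥ N,
    ∃ c : ℕ → X, c 0 = x ∧ c n = y ∧ ∀ i < n, dist (f i (c i)) (c (i + 1)) < δ

/-- Chain transitivity of an NDS. -/
def NDSChainTransitive (f : ℕ → X → X) : Prop :=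
  ∀ x y : X, ∀ δ : ℝ, 0 < δ → ∃ n : ℕ, 1 ≤ n ∧
    ∃ c : ℕ → X, c 0 = x ∧ c n = y ∧ ∀ i < n, dist (f i (c i)) (c (i + 1)) < δ

/-- The shadowing property of an NDS. -/
def NDSShadowing (f : ℕ → X → X) : Prop :=
  ∀ ε : ℝ, 0 < ε → ∃ δ : ℝ, 0 < δ ∧ ∀ n : ℕ, ∀ c : ℕ → X,
    (∀ i < n, dist (f i (c i)) (c (i + 1)) < δ) →
      ∃ z : X, ∀ i ≤ n, dist (nComp f 0 i z) (c i) < ε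

end MetricDefs

end NDSDefs

/-!
The first `l` maps of `f^{[n]}` compose to the first `n * l` maps of `f`, so the diagonal orbit
of `x` under `f^{[n]}` with multipliers `1, …, m` is its diagonal orbit under `f` with multipliers
`n, 2n, …, mn`. The latter is a coordinate projection of the orbit with multipliers `1, …, nm`,
and it is also the part of the orbit with multipliers `1, …, m` along times divisible by `n`.
Hence density passes in both directions, with the same set of base points `x`.
-/

section Composition

variable {X : Type*} (f : ℕ → X → X)

theorem nComp_add (i a b : ℕ) : nComp f i (a + b) = nComp f (i + a) b ∘ nComp f i a := by
  induction b with
  | zero => rfl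
  | succ b ih => rw [← Nat.add_assoc, nComp, ih, nComp, Nat.add_assoc, Function.comp_assoc]

theorem nComp_iterNDS (k i l : ℕ) : nComp (iterNDS f k) i l = nComp f (k * i) (k * l) := by
  induction l with
  | zero => rfl
  | succ l ih => rw [nComp, ih, iterNDS, Nat.mul_succ, nComp_add, Nat.mul_add]

end Composition

section DiagonalOrbit

variable {X ι κ : Type*} (f : ℕ → X → X)

/-- The orbit of the diagonal point `(x)_{i ∈ ι}` under the product of the iterates `f^{[a i]}`,
at positive times. Density of such orbits, for `a = (1, …, m)`, is what Δ-transitivity asks. -/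
def diagonalOrbit (a : ι → ℕ) (x : X) : Set (ι → X) :=
  {y | ∃ l : ℕ, 1 ≤ l ∧ y = fun i => nComp f 0 (a i * l) x}

theorem diagonalOrbit_iterNDS (n : ℕ) (a : ι → ℕ) (x : X) :
    diagonalOrbit (iterNDS f n) a x = diagonalOrbit f (fun i => n * a i) x := by
  simp only [diagonalOrbit, nComp_iterNDS, Nat.mul_zero, Nat.mul_assoc]

variable {f}

theorem diagonalOrbit_mul_subset {n : ℕ} (hn : 1 ≤ n) (a : ι → ℕ) (x : X) :
    diagonalOrbit f (fun i => n * a i) x ⊆ diagonalOrbit f a x := by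
  rintro _ ⟨l, hl, rfl⟩
  exact ⟨n * l, Nat.mul_pos hn hl, by simp only [Nat.mul_left_comm, Nat.mul_assoc]⟩

theorem image_comp_diagonalOrbit (e : ι → κ) (a : κ → ℕ) (x : X) :
    (· ∘ e) '' diagonalOrbit f a x = diagonalOrbit f (a ∘ e) x := by
  ext y
  constructor
  · rintro ⟨_, ⟨l, hl, rfl⟩, rfl⟩
    exact ⟨l, hl, rfl⟩
  · rintro ⟨l, hl, rfl⟩
    exact ⟨_, ⟨l, hl, rfl⟩, rfl⟩

variable [TopologicalSpace X]

theorem dense_diagonalOrbit_comp {e : ι → κ} (he : Function.Injective e) {a : κ → ℕ} {x : X}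
    (h : Dense (diagonalOrbit f a x)) : Dense (diagonalOrbit f (a ∘ e) x) := by
  have : Nonempty X := ⟨x⟩
  rw [← image_comp_diagonalOrbit]
  exact he.surjective_comp_right.denseRange.dense_image (Pi.continuous_precomp e) h

theorem dense_diagonalOrbit_of_injective {N : ℕ} {a : ι → ℕ} (ha : Function.Injective a)
    (haN : ∀ i, a i ∈ Set.Icc 1 N) {x : X}
    (h : Dense (diagonalOrbit f (fun j : Fin N => j.1 + 1) x)) :
    Dense (diagonalOrbit f a x) := by
  let e (i : ι) : Fin N := ⟨a i - 1, Nat.sub_one_lt_of_le (haN i).1 (haN i).2⟩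
  have hae : (fun j : Fin N => j.1 + 1) ∘ e = a := funext fun i => Nat.sub_add_cancel (haN i).1
  have he : Function.Injective e := .of_comp (hae ▸ ha)
  exact hae ▸ dense_diagonalOrbit_comp he h

end DiagonalOrbit

section DeltaTransitive

variable {X : Type*} [TopologicalSpace X]

theorem deltaTransitive_iff_dense_diagonalOrbit {f : ℕ → X → X} :
    DeltaTransitive f ↔ ∀ m : ℕ, 1 ≤ m → ∃ Y : Set X, Dense Y ∧ IsGδ Y ∧
      ∀ x ∈ Y, Dense (diagonalOrbit f (fun i : Fin m => i.1 + 1) x) :=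
  Iff.rfl

theorem deltaTransitive_iff_iterate_general (f : ℕ → X → X) {n : ℕ} (hn : 1 ≤ n) :
    DeltaTransitive f ↔ DeltaTransitive (iterNDS f n) := by
  simp only [deltaTransitive_iff_dense_diagonalOrbit, diagonalOrbit_iterNDS]
  constructor
  · intro h m hm
    obtain ⟨Y, hYd, hYG, hY⟩ := h (n * m) (Nat.mul_pos hn hm)
    have hinj : Function.Injective fun i : Fin m => n * (i.1 + 1) := fun i j hij =>
      Fin.ext (Nat.succ_injective (Nat.eq_of_mul_eq_mul_left hn hij))
    have hmem (i : Fin m) : n * (i.1 + 1) ∈ Set.Icc 1 (n * m) :=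
      ⟨Nat.mul_pos hn i.1.succ_pos, Nat.mul_le_mul_left n i.2⟩
    exact ⟨Y, hYd, hYG, fun x hx => dense_diagonalOrbit_of_injective hinj hmem (hY x hx)⟩
  · intro h m hm
    obtain ⟨Y, hYd, hYG, hY⟩ := h m hm
    exact ⟨Y, hYd, hYG, fun x hx => (hY x hx).mono (diagonalOrbit_mul_subset hn _ x)⟩

end DeltaTransitive

/-- an NDS is Δ-transitive iff its `n`-th iterate is Δ-transitive. -/
theorem deltaTransitive_iff_iterate {X : Type*} [MetricSpace X] [CompactSpace X]
    (f : ℕ → X → X) (hf : ∀ n, Continuous (f n)) (n : ℕ) (hn : 1 ≤ n) :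
    DeltaTransitive f ↔ DeltaTransitive (iterNDS f n) :=
  deltaTransitive_iff_iterate_general f hn
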